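/- Sufficient condition for counterfactual validity under the shortest-path cascading model (the paper's Proposition 2, made precise): let Ω_v, Ω_w ⊆ V be disjoint sets of failed vertices, let Ω̂ = Ω_v ∪ Ω_w, and let k : V → ℝ be vertex capacities. The one-round shortest-path cascade of Ω̂ is c(Ω̂) = { n ∉ Ω̂ : ℓ_{G−Ω̂}(n) > k(n) }. If for every vertex n ∉ Ω̂ one has k(n) ≥ ℓ_{G−Ω_v}(n) + Σ_{z∈Ω_w} ℓ_{G−Ω_v}(z) (or, symmetrically, k(n) ≥ ℓ_{G−Ω_w}(n) + Σ_{z∈Ω_v} ℓ_{G−Ω_w}(z)), then c(Ω̂) = ∅, i.e. Ω̂ is at steady state. -/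

import Mathlib

/-- `n` is interior to the ordered pair `(s, t)` in `H`: `s ≠ t`, `n` is distinct from
both endpoints, and `n` lies on some shortest `s`–`t` path in `H`. -/
def IsInterior {W : Type*} (H : SimpleGraph W) (n s t : W) : Prop :=
  s ≠ t ∧ n ≠ s ∧ n ≠ t ∧
    ∃ p : H.Walk s t, p.IsPath ∧ p.length = H.dist s t ∧ n ∈ p.support

/-- The load of `n` in `H`: the number of ordered pairs `(s, t)` of vertices such that
`n` is interior to `(s, t)` in `H`. -/
noncomputable def load {W : Type*} (H : SimpleGraph W) (n : W) : ℕ :=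
  {p : W × W | IsInterior H n p.1 p.2}.ncard

open Classical

/-- The load of `n` in the graph `G − S` obtained from `G` by deleting the vertices of
`S` (i.e., the subgraph induced on `Sᶜ`); by convention `0` for deleted vertices. -/
noncomputable def loadDel {V : Type*} (G : SimpleGraph V) (S : Set V) (n : V) : ℕ :=
  if h : n ∈ Sᶜ then load (G.induce Sᶜ) ⟨n, h⟩ else 0

/-!
Take a pair `(s, t)` with `n` interior to it in `G − (S ∪ W)`, and compare with a shortest
`s`–`t` path of the larger graph `G − S`. Either that path meets `W`, so some `z ∈ W` is
interior to `(s, t)` in `G − S`; or it avoids `W`, so deleting `W` does not change the distance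
from `s` to `t`, and `n` is already interior to `(s, t)` in `G − S`. Hence the pairs counted by
the load of `n` after the deletion of `W` are among those counted by the loads of `n` and of the
`z ∈ W` before it.
-/

section Embedding

variable {W W' : Type*} {H : SimpleGraph W} {H' : SimpleGraph W'}

lemma dist_le_length_of_support_subset_range (f : H' ↪g H) {u v : W'} (q : H.Walk (f u) (f v))
    (hq : ∀ x ∈ q.support, x ∈ Set.range f) : H'.dist u v ≤ q.length := by
  let e := f.isoInduceRange
  have symm_apply (w : W') (hw : f w ∈ Set.range f) : e.symm ⟨f w, hw⟩ = w :=
    e.symm_apply_apply w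
  let p : H'.Walk u v :=
    ((q.induce (Set.range f) hq).map e.symm.toHom).copy (symm_apply u _) (symm_apply v _)
  have length_p : p.length = q.length := calc
    p.length = (q.induce (Set.range f) hq).length :=
      (SimpleGraph.Walk.length_copy ..).trans (SimpleGraph.Walk.length_map ..)
    _ = ((q.induce (Set.range f) hq).map (SimpleGraph.Embedding.induce _).toHom).length :=
      (SimpleGraph.Walk.length_map ..).symm
    _ = q.length := congrArg SimpleGraph.Walk.length (q.map_induce hq)
  exact length_p ▸ SimpleGraph.dist_le p

lemma IsInterior.map {n s t : W'} (h : IsInterior H' n s t) (f : H' →g H)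
    (hf : Function.Injective f) (hdist : H'.dist s t ≤ H.dist (f s) (f t)) :
    IsInterior H (f n) (f s) (f t) := by
  obtain ⟨hst, hns, hnt, p, -, hp, hn⟩ := h
  have length_map : (p.map f).length = H.dist (f s) (f t) :=
    le_antisymm (by rwa [SimpleGraph.Walk.length_map, hp]) (SimpleGraph.dist_le _)
  refine ⟨hf.ne hst, hf.ne hns, hf.ne hnt, p.map f,
    (p.map f).isPath_of_length_eq_dist length_map, length_map, ?_⟩
  rw [SimpleGraph.Walk.support_map]
  exact List.mem_map_of_mem hn

lemma IsInterior.map_or_exists_notMem_range {n s t : W'} (h : IsInterior H' n s t)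
    (f : H' ↪g H) :
    IsInterior H (f n) (f s) (f t) ∨ ∃ z ∉ Set.range f, IsInterior H z (f s) (f t) := by
  obtain ⟨p, -⟩ := h.2.2.2
  obtain ⟨q, hq, hq_length⟩ := (p.reachable.map f.toHom).exists_path_of_dist
  by_cases hrange : ∀ x ∈ q.support, x ∈ Set.range f
  · exact .inl <| h.map f.toHom f.injective <|
      (dist_le_length_of_support_subset_range f q hrange).trans_eq hq_length
  · push Not at hrange
    obtain ⟨z, hzq, hz⟩ := hrange
    have ne_map (w : W') : z ≠ f w := fun hzw => hz ⟨w, hzw.symm⟩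
    exact .inr ⟨z, hz, f.injective.ne h.1, ne_map s, ne_map t, q, hq, hq_length, hzq⟩

lemma load_le_load_add_sum_load [Finite W] (f : H' ↪g H) {Z : Finset W}
    (hZ : (Set.range f)ᶜ ⊆ Z) (n : W') :
    load H' n ≤ load H (f n) + ∑ z ∈ Z, load H z := by
  let pairs (z : W) : Set (W × W) := {p | IsInterior H z p.1 p.2}
  have mapsTo : ∀ p ∈ {p : W' × W' | IsInterior H' n p.1 p.2},
      Prod.map f f p ∈ pairs (f n) ∪ ⋃ z ∈ Z, pairs z := by
    intro p hp
    obtain hfn | ⟨z, hz, hzp⟩ := hp.map_or_exists_notMem_range f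
    · exact .inl hfn
    · exact .inr (Set.mem_biUnion (hZ hz) hzp)
  calc load H' n
      ≤ (pairs (f n) ∪ ⋃ z ∈ Z, pairs z).ncard :=
        Set.ncard_le_ncard_of_injOn _ mapsTo (f.injective.prodMap f.injective).injOn
    _ ≤ (pairs (f n)).ncard + (⋃ z ∈ Z, pairs z).ncard := Set.ncard_union_le _ _
    _ ≤ load H (f n) + ∑ z ∈ Z, load H z :=
        Nat.add_le_add_left (Finset.set_ncard_biUnion_le Z pairs) _

end Embedding

section Deletion

variable {V : Type*} (G : SimpleGraph V)

lemma loadDel_of_notMem {S : Set V} {n : V} (hn : n ∉ S) :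
    loadDel G S n = load (G.induce Sᶜ) ⟨n, hn⟩ :=
  dif_pos hn

lemma loadDel_of_mem {S : Set V} {n : V} (hn : n ∈ S) : loadDel G S n = 0 :=
  dif_neg (not_not.2 hn)

lemma sum_subtype_load_le_sum_loadDel (S : Set V) (W : Finset V) :
    ∑ z ∈ W.subtype (· ∈ Sᶜ), load (G.induce Sᶜ) z ≤ ∑ z ∈ W, loadDel G S z :=
  calc ∑ z ∈ W.subtype (· ∈ Sᶜ), load (G.induce Sᶜ) z
      = ∑ z ∈ W.subtype (· ∈ Sᶜ), loadDel G S z :=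
        Finset.sum_congr rfl fun z _ => (loadDel_of_notMem G z.2).symm
    _ = ∑ z ∈ W with z ∈ Sᶜ, loadDel G S z := Finset.sum_subtype_eq_sum_filter _
    _ ≤ ∑ z ∈ W, loadDel G S z := Finset.sum_le_sum_of_subset (Finset.filter_subset _ W)

lemma loadDel_union_le [Finite V] (S : Set V) (W : Finset V) (n : V) :
    loadDel G (S ∪ W) n ≤ loadDel G S n + ∑ z ∈ W, loadDel G S z := by
  by_cases hn : n ∈ S ∪ W
  · exact (loadDel_of_mem G hn).trans_le (Nat.zero_le _)
  have compl_subset : (S ∪ W)ᶜ ⊆ Sᶜ := Set.compl_subset_compl.2 Set.subset_union_left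
  let f := G.induceHomOfLE compl_subset
  have compl_range_subset : (Set.range f)ᶜ ⊆ W.subtype (· ∈ Sᶜ) := by
    intro z hz
    by_contra hzW
    have hzW : (z : V) ∉ W := by simpa using hzW
    exact hz ⟨⟨z, not_or.2 ⟨z.2, hzW⟩⟩, rfl⟩
  rw [loadDel_of_notMem G hn, loadDel_of_notMem G (compl_subset hn)]
  exact (load_le_load_add_sum_load f compl_range_subset ⟨n, hn⟩).trans
    (Nat.add_le_add_left (sum_subtype_load_le_sum_loadDel G S W) _)

end Deletion

/-- **Proposition 2** (sufficient condition for counterfactual validity under the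
shortest-path cascading model): let `Ω_v, Ω_w` be disjoint failed sets, `Ω̂` their
union, and `k` vertex capacities. If for every vertex `n ∉ Ω̂` one has
`k n ≥ ℓ_{G−Ω_v}(n) + Σ_{z ∈ Ω_w} ℓ_{G−Ω_v}(z)` (or the symmetric condition with `v`
and `w` exchanged), then the one-round shortest-path cascade of `Ω̂`,
`c(Ω̂) = {n ∉ Ω̂ : ℓ_{G−Ω̂}(n) > k n}`, is empty. -/
theorem shortestPath_counterfactual_steady {V : Type*} [Fintype V] [DecidableEq V]
    (G : SimpleGraph V) (k : V → ℝ) (Ωv Ωw : Finset V) (hdisj : Disjoint Ωv Ωw)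
    (hcond :
      (∀ n ∉ Ωv ∪ Ωw,
        (loadDel G (↑Ωv) n : ℝ) + ∑ z ∈ Ωw, (loadDel G (↑Ωv) z : ℝ) ≤ k n) ∨
      (∀ n ∉ Ωv ∪ Ωw,
        (loadDel G (↑Ωw) n : ℝ) + ∑ z ∈ Ωv, (loadDel G (↑Ωw) z : ℝ) ≤ k n)) :
    {n : V | n ∉ Ωv ∪ Ωw ∧ k n < (loadDel G (↑(Ωv ∪ Ωw)) n : ℝ)} = ∅ := by
  refine Set.eq_empty_of_forall_notMem fun n ⟨hn, hlt⟩ => hlt.not_ge ?_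
  rw [Finset.coe_union]
  obtain hv | hw := hcond
  · refine le_trans ?_ (hv n hn)
    exact_mod_cast loadDel_union_le G Ωv Ωw n
  · refine le_trans ?_ (hw n hn)
    rw [Set.union_comm]
    exact_mod_cast loadDel_union_le G Ωw Ωv n
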